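/- arXiv:math/0302245 — 2 statements merged into one kernel-verified Lean document; each statement's English description precedes it below -/
import Mathlib

section
/- Let H = ⟨Y|S⟩ be a finitely presented group and ψ > 1, ω > 0 real parameters. Then the 1-skeleton Γ⁽¹⁾_H̃ of the cusp complex of H is a δ-hyperbolic metric space, with δ = 4ωψ + (log_ψ(2) + 2)·ω·log(ψ): every geodesic triangle is δ-thin, i.e. each side lies in the δ-neighborhood of the union of the other two sides. -/
/-!
STATEMENT 8: For a finitely presented group `H = ⟨Y|S⟩` and parameters `ψ > 1, ω > 0`,
the 1-skeleton of the cusp complex of `H` (vertex set `H × ℕ`; horizontal edges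
`(h,i) — (hy,i)` of length `ψ^{-i}` for `y ∈ Y`; vertical edges `(h,i) — (h,i+1)` of
length `ω log ψ`; induced path metric) is δ-hyperbolic with
`δ = 4ωψ + (log_ψ 2 + 2) ω log ψ`: every geodesic triangle is δ-thin.
-/

open Set

variable {H : Type*} [Group H]

/-- Horizontal adjacency in the cusp complex. -/
def Horiz (Y : Set H) (u v : H × ℕ) : Prop :=
  u.2 = v.2 ∧ ∃ y : H, (y ∈ Y ∨ y⁻¹ ∈ Y) ∧ v.1 = u.1 * y

/-- Vertical adjacency in the cusp complex. -/
def Vert (u v : H × ℕ) : Prop :=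
  u.1 = v.1 ∧ (v.2 = u.2 + 1 ∨ u.2 = v.2 + 1)

/-- Adjacency in the 1-skeleton of the cusp complex. -/
def CuspAdj (Y : Set H) (u v : H × ℕ) : Prop := Horiz Y u v ∨ Vert u v

/-- Length of an edge of the cusp complex: horizontal edges at depth `i` have length
`ψ^{-i}`, vertical edges have length `ω log ψ`. -/
noncomputable def stepLen (ψ ω : ℝ) (u v : H × ℕ) : ℝ :=
  if u.2 = v.2 then ψ ^ (-(u.2 : ℝ)) else ω * Real.log ψ

/-- `p` is an edge path of combinatorial length `n` in the cusp complex. -/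
def IsPathOn (Y : Set H) (p : ℕ → H × ℕ) (n : ℕ) : Prop :=
  ∀ k < n, CuspAdj Y (p k) (p (k + 1))

/-- Metric length of the edge path `p` (with `n` edges). -/
noncomputable def pathLen (ψ ω : ℝ) (p : ℕ → H × ℕ) (n : ℕ) : ℝ :=
  ∑ k ∈ Finset.range n, stepLen ψ ω (p k) (p (k + 1))

/-- The induced path metric on the 1-skeleton of the cusp complex. -/
noncomputable def cuspDist (Y : Set H) (ψ ω : ℝ) (u v : H × ℕ) : ℝ :=
  sInf {c | ∃ (n : ℕ) (p : ℕ → H × ℕ),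
    IsPathOn Y p n ∧ p 0 = u ∧ p n = v ∧ c = pathLen ψ ω p n}

/-- A geodesic edge path: an edge path realizing the path metric between its
endpoints. -/
def IsGeodesicPath (Y : Set H) (ψ ω : ℝ) (p : ℕ → H × ℕ) (n : ℕ) : Prop :=
  IsPathOn Y p n ∧ pathLen ψ ω p n = cuspDist Y ψ ω (p 0) (p n)

/-- Every vertex of the path `(p, n)` is within distance `δ` of a vertex of one of the
paths `(q, m)`, `(r, l)`. -/
noncomputable def SideThin (Y : Set H) (ψ ω δ : ℝ) (p : ℕ → H × ℕ) (n : ℕ)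
    (q : ℕ → H × ℕ) (m : ℕ) (r : ℕ → H × ℕ) (l : ℕ) : Prop :=
  ∀ k ≤ n, ∃ j : ℕ, (j ≤ m ∧ cuspDist Y ψ ω (p k) (q j) ≤ δ) ∨
    (j ≤ l ∧ cuspDist Y ψ ω (p k) (r j) ≤ δ)

/-!
A path of maximal depth `m` is at least as long as the detour that goes vertically from one endpoint
to depth `m`, across at depth `m`, and vertically to the other endpoint: horizontal edges of the
path cost at least `ψ ^ (-m)` each, and they cover the word distance of the endpoints. So a geodesic
is such a detour, and comparing `m` with `m ± 1` shows that `ψ ^ m` is comparable to the word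
distance. In a geodesic triangle, the triangle inequality for the word metric then bounds the depth
of each side by that of the deeper of the other two, up to `log_ψ 2 + 1`. A vertex of a side
therefore reaches another side by at most that many vertical edges and one horizontal move of length
at most `2ωψ`.
-/

open SimpleGraph (mulCayley)

section Length

variable {V : Type*} {ψ ω : ℝ} {u v : V × ℕ}

lemma stepLen_comm (ψ ω : ℝ) (u v : V × ℕ) : stepLen ψ ω u v = stepLen ψ ω v u := by
  by_cases h : u.2 = v.2
  · simp [stepLen, h]
  · simp [stepLen, h, Ne.symm h]

lemma stepLen_nonneg (hψ : 1 ≤ ψ) (hω : 0 ≤ ω) (u v : V × ℕ) : 0 ≤ stepLen ψ ω u v := by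
  have hlog := Real.log_nonneg hψ
  unfold stepLen
  split_ifs <;> positivity

lemma Vert.stepLen_eq (h : Vert u v) : stepLen ψ ω u v = ω * Real.log ψ :=
  if_neg (by have := h.2; omega)

lemma pathLen_zero (ψ ω : ℝ) (p : ℕ → V × ℕ) : pathLen ψ ω p 0 = 0 :=
  Finset.sum_range_zero _

lemma pathLen_succ (ψ ω : ℝ) (p : ℕ → V × ℕ) (n : ℕ) :
    pathLen ψ ω p (n + 1) = pathLen ψ ω p n + stepLen ψ ω (p n) (p (n + 1)) :=
  Finset.sum_range_succ _ _

lemma pathLen_reverse (ψ ω : ℝ) (p : ℕ → V × ℕ) (n : ℕ) :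
    pathLen ψ ω (fun k ↦ p (n - k)) n = pathLen ψ ω p n := by
  unfold pathLen
  rw [← Finset.sum_range_reflect]
  refine Finset.sum_congr rfl fun k hk ↦ ?_
  have hkn := Finset.mem_range.1 hk
  simp only
  rw [stepLen_comm, show n - (n - 1 - k) = k + 1 by omega, show n - (n - 1 - k + 1) = k by omega]

end Length

section EdgePaths

variable {Y : Set H} {ψ ω : ℝ} {u v : H × ℕ} {p : ℕ → H × ℕ} {n m : ℕ}

lemma CuspAdj.symm (h : CuspAdj Y u v) : CuspAdj Y v u := by
  rcases h with ⟨hdepth, y, hy, hmul⟩ | ⟨hfst, hdepth⟩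
  · exact .inl ⟨hdepth.symm, y⁻¹, by rw [inv_inv]; exact hy.symm, by simp [hmul]⟩
  · exact .inr ⟨hfst.symm, hdepth.symm⟩

lemma cuspAdj_of_adj {g h : H} (hgh : (mulCayley Y).Adj g h) (i : ℕ) :
    CuspAdj Y (g, i) (h, i) := by
  obtain ⟨-, hmem⟩ := (SimpleGraph.mulCayley_adj Y g h).1 hgh
  exact .inl ⟨rfl, g⁻¹ * h, by simpa using hmem, by simp⟩

lemma Horiz.adj_or_eq (h : Horiz Y u v) : (mulCayley Y).Adj u.1 v.1 ∨ u.1 = v.1 := by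
  obtain ⟨-, y, hy, hmul⟩ := h
  by_cases heq : u.1 = v.1
  · exact .inr heq
  · exact .inl ((SimpleGraph.mulCayley_adj Y _ _).2 ⟨heq, by simpa [hmul] using hy⟩)

lemma Horiz.dist_le_one (h : Horiz Y u v) : (mulCayley Y).dist u.1 v.1 ≤ 1 := by
  rcases h.adj_or_eq with hadj | heq
  · exact (SimpleGraph.dist_eq_one_iff_adj.2 hadj).le
  · simp [heq]

lemma CuspAdj.reachable (h : CuspAdj Y u v) : (mulCayley Y).Reachable u.1 v.1 := by
  have hadj_or_eq : (mulCayley Y).Adj u.1 v.1 ∨ u.1 = v.1 :=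
    h.elim Horiz.adj_or_eq fun hvert ↦ .inr hvert.1
  rcases hadj_or_eq with hadj | heq
  · exact hadj.reachable
  · rw [heq]

lemma IsPathOn.reachable (hp : IsPathOn Y p n) {k l : ℕ} (hkl : k ≤ l) (hl : l ≤ n) :
    (mulCayley Y).Reachable (p k).1 (p l).1 := by
  induction l, hkl using Nat.le_induction with
  | base => rfl
  | succ l _ ih => exact (ih (by omega)).trans (hp l hl).reachable

lemma IsPathOn.reverse (hp : IsPathOn Y p n) : IsPathOn Y (fun k ↦ p (n - k)) n := by
  intro k hk
  have hadj := hp (n - (k + 1)) (by omega)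
  rw [show n - (k + 1) + 1 = n - k by omega] at hadj
  exact hadj.symm

lemma Horiz.stepLen_eq (hψ : 0 ≤ ψ) (h : Horiz Y u v) : stepLen ψ ω u v = (ψ ^ u.2)⁻¹ := by
  rw [stepLen, if_pos h.1, Real.rpow_neg hψ, Real.rpow_natCast]

lemma CuspAdj.le_stepLen (hψ : 1 ≤ ψ) (h : CuspAdj Y u v) (hm : u.2 ≤ m) :
    ω * Real.log ψ * |(v.2 : ℝ) - u.2| + (mulCayley Y).dist u.1 v.1 * (ψ ^ m)⁻¹
      ≤ stepLen ψ ω u v := by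
  rcases h with hhor | hvert
  · have hdist : ((mulCayley Y).dist u.1 v.1 : ℝ) ≤ 1 := mod_cast hhor.dist_le_one
    have hpow : (ψ ^ m)⁻¹ ≤ (ψ ^ u.2)⁻¹ := by gcongr
    rw [hhor.stepLen_eq (by positivity), hhor.1, sub_self, abs_zero, mul_zero, zero_add, ← hhor.1]
    exact (mul_le_of_le_one_left (by positivity) hdist).trans hpow
  · rw [hvert.stepLen_eq, hvert.1, SimpleGraph.dist_self]
    rcases hvert.2 with hdown | hup
    · simp [hdown]
    · simp [hup]

lemma IsPathOn.le_pathLen_sub (hψ : 1 ≤ ψ) (hω : 0 ≤ ω) (hp : IsPathOn Y p n)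
    (hm : ∀ k ≤ n, (p k).2 ≤ m) {k l : ℕ} (hkl : k ≤ l) (hl : l ≤ n) :
    ω * Real.log ψ * |((p l).2 : ℝ) - (p k).2|
      + (mulCayley Y).dist (p k).1 (p l).1 * (ψ ^ m)⁻¹ ≤ pathLen ψ ω p l - pathLen ψ ω p k := by
  have hlog := Real.log_nonneg hψ
  induction l, hkl using Nat.le_induction with
  | base => simp
  | succ l hkl ih =>
    have hdepth := abs_sub_le ((p (l + 1)).2 : ℝ) (p l).2 (p k).2
    have hdist : ((mulCayley Y).dist (p k).1 (p (l + 1)).1 : ℝ)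
        ≤ (mulCayley Y).dist (p k).1 (p l).1 + (mulCayley Y).dist (p l).1 (p (l + 1)).1 :=
      mod_cast (hp.reachable hkl (by omega)).dist_triangle_left _
    have hstep := (hp l hl).le_stepLen (ω := ω) hψ (hm l (by omega))
    rw [pathLen_succ]
    calc _ ≤ ω * Real.log ψ * (|((p (l + 1)).2 : ℝ) - (p l).2| + |((p l).2 : ℝ) - (p k).2|)
          + ((mulCayley Y).dist (p k).1 (p l).1 + (mulCayley Y).dist (p l).1 (p (l + 1)).1)
            * (ψ ^ m)⁻¹ := by gcongr
      _ ≤ _ := by linarith [ih (by omega)]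

end EdgePaths

section JoinedWithin

/-- `u` and `v` are joined by an edge path of length at most `c`. Unlike `cuspDist Y ψ ω u v ≤ c`,
this asserts that a path exists, so it composes even when `Y` does not generate `H` (`cuspDist` is
`0` between different components). -/
def JoinedWithin (Y : Set H) (ψ ω : ℝ) (u v : H × ℕ) (c : ℝ) : Prop :=
  ∃ (n : ℕ) (p : ℕ → H × ℕ), IsPathOn Y p n ∧ p 0 = u ∧ p n = v ∧ pathLen ψ ω p n ≤ c

variable {Y : Set H} {ψ ω : ℝ} {u v w : H × ℕ} {c c' : ℝ}

lemma JoinedWithin.cuspDist_le (hψ : 1 ≤ ψ) (hω : 0 ≤ ω) (h : JoinedWithin Y ψ ω u v c) :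
    cuspDist Y ψ ω u v ≤ c := by
  obtain ⟨n, p, hp, hu, hv, hlen⟩ := h
  refine le_trans (csInf_le ⟨0, ?_⟩ ⟨n, p, hp, hu, hv, rfl⟩) hlen
  rintro _ ⟨n, p, _, _, _, rfl⟩
  exact Finset.sum_nonneg fun _ _ ↦ stepLen_nonneg hψ hω _ _

lemma JoinedWithin.mono (h : JoinedWithin Y ψ ω u v c) (hc : c ≤ c') :
    JoinedWithin Y ψ ω u v c' := by
  obtain ⟨n, p, hp, hu, hv, hlen⟩ := h
  exact ⟨n, p, hp, hu, hv, hlen.trans hc⟩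

lemma JoinedWithin.refl (Y : Set H) (ψ ω : ℝ) (u : H × ℕ) : JoinedWithin Y ψ ω u u 0 :=
  ⟨0, fun _ ↦ u, fun _ hk ↦ absurd hk (Nat.not_lt_zero _), rfl, rfl, (pathLen_zero ψ ω _).le⟩

lemma JoinedWithin.symm (h : JoinedWithin Y ψ ω u v c) : JoinedWithin Y ψ ω v u c := by
  obtain ⟨n, p, hp, hu, hv, hlen⟩ := h
  exact ⟨n, _, hp.reverse, by simpa using hv, by simpa using hu,
    (pathLen_reverse ψ ω p n).trans_le hlen⟩

lemma JoinedWithin.snoc (h : JoinedWithin Y ψ ω u v c) (hvw : CuspAdj Y v w) :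
    JoinedWithin Y ψ ω u w (c + stepLen ψ ω v w) := by
  obtain ⟨n, p, hp, hu, rfl, hlen⟩ := h
  let q : ℕ → H × ℕ := fun k ↦ if k ≤ n then p k else w
  have hq {k : ℕ} (hk : k ≤ n) : q k = p k := if_pos hk
  have hqn : q (n + 1) = w := if_neg (by omega)
  refine ⟨n + 1, q, fun k hk ↦ ?_, (hq n.zero_le).trans hu, hqn, ?_⟩
  · rcases Nat.lt_succ_iff_lt_or_eq.1 hk with hlt | rfl
    · rw [hq hlt.le, hq hlt]
      exact hp k hlt
    · rwa [hq le_rfl, hqn]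
  · have hsum : pathLen ψ ω q n = pathLen ψ ω p n := Finset.sum_congr rfl fun k hk ↦ by
      have hkn := Finset.mem_range.1 hk
      rw [hq hkn.le, hq hkn]
    rw [pathLen_succ, hsum, hq le_rfl, hqn]
    gcongr

lemma JoinedWithin.trans (huv : JoinedWithin Y ψ ω u v c) (hvw : JoinedWithin Y ψ ω v w c') :
    JoinedWithin Y ψ ω u w (c + c') := by
  obtain ⟨n, q, hq, rfl, rfl, hlen⟩ := hvw
  suffices hprefix : ∀ k ≤ n, JoinedWithin Y ψ ω u (q k) (c + pathLen ψ ω q k) from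
    (hprefix n le_rfl).mono (by gcongr)
  intro k hk
  induction k with
  | zero => simpa only [pathLen_zero, add_zero] using huv
  | succ k ih =>
    rw [pathLen_succ, ← add_assoc]
    exact (ih (by omega)).snoc (hq k hk)

lemma joinedWithin_vertical (Y : Set H) (ψ ω : ℝ) (h : H) {i j : ℕ} (hij : i ≤ j) :
    JoinedWithin Y ψ ω (h, i) (h, j) (((j : ℝ) - i) * (ω * Real.log ψ)) := by
  induction j, hij using Nat.le_induction with
  | base => simpa using JoinedWithin.refl Y ψ ω (h, i)
  | succ j _ ih =>
    have hvert : Vert (h, j) (h, j + 1) := ⟨rfl, .inl rfl⟩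
    refine (ih.snoc (.inr hvert)).mono (le_of_eq ?_)
    rw [hvert.stepLen_eq]
    push_cast
    ring

lemma joinedWithin_of_walk (hψ : 0 ≤ ψ) (ω : ℝ) {g h : H} (walk : (mulCayley Y).Walk g h) (i : ℕ) :
    JoinedWithin Y ψ ω (g, i) (h, i) (walk.length * (ψ ^ i)⁻¹) := by
  induction walk with
  | nil => simpa using JoinedWithin.refl Y ψ ω _
  | @cons g g' _ hadj walk ih =>
    have hstep := (JoinedWithin.refl Y ψ ω (g, i)).snoc (cuspAdj_of_adj hadj i)
    have hlen : stepLen ψ ω (g, i) (g', i) = (ψ ^ i)⁻¹ := by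
      rw [stepLen, if_pos rfl, Real.rpow_neg hψ, Real.rpow_natCast]
    refine (hstep.trans ih).mono (le_of_eq ?_)
    rw [hlen, SimpleGraph.Walk.length_cons]
    push_cast
    ring

lemma joinedWithin_horizontal (hψ : 0 ≤ ψ) (ω : ℝ) {g h : H}
    (hgh : (mulCayley Y).Reachable g h) (i : ℕ) :
    JoinedWithin Y ψ ω (g, i) (h, i) ((mulCayley Y).dist g h * (ψ ^ i)⁻¹) := by
  obtain ⟨walk, hwalk⟩ := hgh.exists_walk_length_eq_dist
  exact hwalk ▸ joinedWithin_of_walk hψ ω walk i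

end JoinedWithin

section Detour

/-- Length of the detour from `u` to `v` through depth `m`: vertically from `u` to depth `m`,
across along a geodesic of the Cayley graph, and vertically back to `v`. -/
noncomputable def detourLen (Y : Set H) (ψ ω : ℝ) (u v : H × ℕ) (m : ℕ) : ℝ :=
  ω * Real.log ψ * (((m : ℝ) - u.2) + (m - v.2)) + (mulCayley Y).dist u.1 v.1 * (ψ ^ m)⁻¹

variable {Y : Set H} {ψ ω : ℝ} {u v : H × ℕ} {p : ℕ → H × ℕ} {n m K : ℕ}

lemma detourLen_comm (Y : Set H) (ψ ω : ℝ) (u v : H × ℕ) (m : ℕ) :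
    detourLen Y ψ ω u v m = detourLen Y ψ ω v u m := by
  rw [detourLen, detourLen, SimpleGraph.dist_comm, add_comm ((m : ℝ) - u.2)]

lemma detourLen_succ (Y : Set H) (hψ : ψ ≠ 0) (ω : ℝ) (u v : H × ℕ) (m : ℕ) :
    detourLen Y ψ ω u v (m + 1) = detourLen Y ψ ω u v m + (2 * (ω * Real.log ψ)
      - (mulCayley Y).dist u.1 v.1 * (ψ - 1) / ψ ^ (m + 1)) := by
  simp only [detourLen, pow_succ]
  push_cast
  field_simp
  ring

lemma joinedWithin_detourLen (hψ : 0 ≤ ψ) (ω : ℝ) (huv : (mulCayley Y).Reachable u.1 v.1)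
    (hu : u.2 ≤ m) (hv : v.2 ≤ m) : JoinedWithin Y ψ ω u v (detourLen Y ψ ω u v m) := by
  refine (((joinedWithin_vertical Y ψ ω u.1 hu).trans (joinedWithin_horizontal hψ ω huv m)).trans
    (joinedWithin_vertical Y ψ ω v.1 hv).symm).mono (le_of_eq ?_)
  rw [detourLen]
  ring

lemma IsPathOn.detourLen_le_pathLen_sub (hψ : 1 ≤ ψ) (hω : 0 ≤ ω) (hp : IsPathOn Y p n)
    (hdepth : ∀ k ≤ n, (p k).2 ≤ (p K).2) {k l : ℕ} (hkK : k ≤ K) (hKl : K ≤ l) (hl : l ≤ n) :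
    detourLen Y ψ ω (p k) (p l) (p K).2 ≤ pathLen ψ ω p l - pathLen ψ ω p k := by
  have hlog := Real.log_nonneg hψ
  have hdown := hp.le_pathLen_sub hψ hω hdepth hkK (hKl.trans hl)
  have hup := hp.le_pathLen_sub hψ hω hdepth hKl hl
  have hdist : ((mulCayley Y).dist (p k).1 (p l).1 : ℝ)
      ≤ (mulCayley Y).dist (p k).1 (p K).1 + (mulCayley Y).dist (p K).1 (p l).1 :=
    mod_cast (hp.reachable hkK (hKl.trans hl)).dist_triangle_left _
  calc _ ≤ ω * Real.log ψ * (|((p K).2 : ℝ) - (p k).2| + |((p l).2 : ℝ) - (p K).2|)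
        + ((mulCayley Y).dist (p k).1 (p K).1 + (mulCayley Y).dist (p K).1 (p l).1)
          * (ψ ^ (p K).2)⁻¹ := by
        unfold detourLen
        gcongr
        · exact le_abs_self _
        · exact (neg_sub ((p l).2 : ℝ) (p K).2).symm.trans_le (neg_le_abs _)
    _ ≤ _ := by linarith

/-- `p` reaches its maximal depth at the index `K` and is no longer than the detour between its
endpoints through that depth. Geodesics have this property, and it determines their shape. -/
structure IsTaut (Y : Set H) (ψ ω : ℝ) (p : ℕ → H × ℕ) (n K : ℕ) : Prop where
  isPathOn : IsPathOn Y p n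
  peak_le : K ≤ n
  depth_le : ∀ k ≤ n, (p k).2 ≤ (p K).2
  pathLen_le : pathLen ψ ω p n ≤ detourLen Y ψ ω (p 0) (p n) (p K).2

lemma IsTaut.reverse (h : IsTaut Y ψ ω p n K) : IsTaut Y ψ ω (fun k ↦ p (n - k)) n (n - K) := by
  have hK : n - (n - K) = K := Nat.sub_sub_self h.peak_le
  refine ⟨h.isPathOn.reverse, Nat.sub_le n K, fun k _ ↦ ?_, ?_⟩
  · simpa only [hK] using h.depth_le (n - k) (Nat.sub_le n k)
  · simpa only [hK, Nat.sub_zero, Nat.sub_self, pathLen_reverse, detourLen_comm Y ψ ω (p n)]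
      using h.pathLen_le

lemma IsTaut.dist_add_dist_le_of_le_peak (hψ : 1 ≤ ψ) (hω : 0 ≤ ω) (h : IsTaut Y ψ ω p n K)
    {k : ℕ} (hk : k ≤ K) :
    (mulCayley Y).dist (p 0).1 (p k).1 + (mulCayley Y).dist (p k).1 (p n).1
      ≤ (mulCayley Y).dist (p 0).1 (p n).1 := by
  have hlog := Real.log_nonneg hψ
  have hfirst := h.isPathOn.le_pathLen_sub hψ hω h.depth_le k.zero_le (hk.trans h.peak_le)
  have hlast := h.isPathOn.detourLen_le_pathLen_sub hψ hω h.depth_le hk h.peak_le le_rfl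
  have hsign : ω * Real.log ψ * (((p k).2 : ℝ) - (p 0).2)
      ≤ ω * Real.log ψ * |((p k).2 : ℝ) - (p 0).2| := by gcongr; exact le_abs_self _
  have hlen := h.pathLen_le
  rw [pathLen_zero] at hfirst
  unfold detourLen at hlast hlen
  have hscaled : ((mulCayley Y).dist (p 0).1 (p k).1 + (mulCayley Y).dist (p k).1 (p n).1 : ℝ)
      * (ψ ^ (p K).2)⁻¹ ≤ (mulCayley Y).dist (p 0).1 (p n).1 * (ψ ^ (p K).2)⁻¹ := by linarith
  exact_mod_cast le_of_mul_le_mul_right hscaled (by positivity)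

lemma IsTaut.dist_add_dist_le (hψ : 1 ≤ ψ) (hω : 0 ≤ ω) (h : IsTaut Y ψ ω p n K)
    {k : ℕ} (hk : k ≤ n) :
    (mulCayley Y).dist (p 0).1 (p k).1 + (mulCayley Y).dist (p k).1 (p n).1
      ≤ (mulCayley Y).dist (p 0).1 (p n).1 := by
  rcases le_total k K with hkK | hKk
  · exact h.dist_add_dist_le_of_le_peak hψ hω hkK
  · have hrev := h.reverse.dist_add_dist_le_of_le_peak hψ hω (Nat.sub_le_sub_left hKk n)
    simp only [Nat.sub_zero, Nat.sub_self, Nat.sub_sub_self hk] at hrev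
    rwa [add_comm, SimpleGraph.dist_comm (u := (p n).1), SimpleGraph.dist_comm (v := (p 0).1),
      SimpleGraph.dist_comm (u := (p n).1)] at hrev

lemma IsTaut.stepLen_le (hψ : 1 ≤ ψ) (hω : 0 ≤ ω) (h : IsTaut Y ψ ω p n K) {k : ℕ} (hk : k < K) :
    stepLen ψ ω (p k) (p (k + 1)) ≤ ω * Real.log ψ * (((p (k + 1)).2 : ℝ) - (p k).2)
      + (mulCayley Y).dist (p k).1 (p (k + 1)).1 * (ψ ^ (p K).2)⁻¹ := by
  have hlog := Real.log_nonneg hψ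
  have hKn := h.peak_le
  have hfirst := h.isPathOn.le_pathLen_sub hψ hω h.depth_le k.zero_le (by omega)
  have hlast := h.isPathOn.detourLen_le_pathLen_sub hψ hω h.depth_le hk h.peak_le le_rfl
  have hsign : ω * Real.log ψ * (((p k).2 : ℝ) - (p 0).2)
      ≤ ω * Real.log ψ * |((p k).2 : ℝ) - (p 0).2| := by gcongr; exact le_abs_self _
  have hdist : ((mulCayley Y).dist (p 0).1 (p n).1 : ℝ) ≤ (mulCayley Y).dist (p 0).1 (p k).1
      + ((mulCayley Y).dist (p k).1 (p (k + 1)).1 + (mulCayley Y).dist (p (k + 1)).1 (p n).1) := by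
    have hleft := (h.isPathOn.reachable k.zero_le (by omega)).dist_triangle_left (p n).1
    have hright :=
      (h.isPathOn.reachable (Nat.le_add_right k 1) (by omega)).dist_triangle_left (p n).1
    exact_mod_cast (by omega)
  have hscaled := mul_le_mul_of_nonneg_right hdist (by positivity : 0 ≤ (ψ ^ (p K).2)⁻¹)
  have hlen := h.pathLen_le
  rw [pathLen_zero] at hfirst
  rw [pathLen_succ] at hlast
  unfold detourLen at hlast hlen
  linarith

lemma IsTaut.step_cases (hψ : 1 < ψ) (hω : 0 < ω) (h : IsTaut Y ψ ω p n K) {k : ℕ} (hk : k < K) :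
    ((p k).2 = (p K).2 ∧ (p (k + 1)).2 = (p K).2) ∨ p (k + 1) = ((p k).1, (p k).2 + 1) := by
  have hlog := Real.log_pos hψ
  have hKn := h.peak_le
  have hlen := h.stepLen_le hψ.le hω.le hk
  rcases h.isPathOn k (by omega) with hhor | hvert
  · refine .inl (and_iff_left_of_imp (hhor.1 ▸ id) |>.2 ?_)
    have hdist : ((mulCayley Y).dist (p k).1 (p (k + 1)).1 : ℝ) ≤ 1 := mod_cast hhor.dist_le_one
    rw [hhor.stepLen_eq (by positivity), hhor.1, sub_self, mul_zero, zero_add, ← hhor.1] at hlen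
    have hpow : (ψ ^ (p k).2)⁻¹ ≤ (ψ ^ (p K).2)⁻¹ :=
      hlen.trans (mul_le_of_le_one_left (by positivity) hdist)
    rw [inv_le_inv₀ (by positivity) (by positivity)] at hpow
    exact (h.depth_le k (by omega)).antisymm ((pow_le_pow_iff_right₀ hψ).1 hpow)
  · rcases hvert.2 with hdown | hup
    · exact .inr (Prod.ext hvert.1.symm hdown)
    · rw [hvert.stepLen_eq, hvert.1, SimpleGraph.dist_self, hup] at hlen
      push_cast at hlen
      nlinarith [mul_pos hω hlog]

lemma IsTaut.eq_add_of_le (hψ : 1 < ψ) (hω : 0 < ω) (h : IsTaut Y ψ ω p n K) {k : ℕ}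
    (hk : (p 0).2 + k ≤ (p K).2) : k ≤ K ∧ p k = ((p 0).1, (p 0).2 + k) := by
  induction k with
  | zero => exact ⟨K.zero_le, rfl⟩
  | succ k ih =>
    obtain ⟨hkK, hpk⟩ := ih (by omega)
    have hdepth : (p k).2 = (p 0).2 + k := by rw [hpk]
    have hlt : k < K := lt_of_le_of_ne hkK (by rintro rfl; omega)
    refine ⟨hlt, ?_⟩
    rcases h.step_cases hψ hω hlt with hflat | hdown
    · omega
    · rw [hdown, hpk, add_assoc]

lemma IsTaut.depth_eq_of_le (hψ : 1 < ψ) (hω : 0 < ω) (h : IsTaut Y ψ ω p n K) {k : ℕ}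
    (hk : (p K).2 ≤ (p 0).2 + k) (hkK : k ≤ K) : (p k).2 = (p K).2 := by
  have hKn := h.peak_le
  obtain ⟨d, hd⟩ := Nat.exists_eq_add_of_le (h.depth_le 0 n.zero_le)
  have hdk : d ≤ k := by omega
  induction k, hdk using Nat.le_induction with
  | base => rw [(h.eq_add_of_le hψ hω hd.ge).2, hd]
  | succ k hdk ih =>
    have hpk := ih (by omega) (by omega)
    rcases h.step_cases hψ hω hkK with hflat | hdown
    · exact hflat.2
    · have hle := h.depth_le (k + 1) (by omega)
      rw [hdown] at hle
      exact absurd hle (by simp [hpk])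

lemma IsTaut.exists_eq_first (hψ : 1 < ψ) (hω : 0 < ω) (h : IsTaut Y ψ ω p n K) {t : ℕ}
    (h0t : (p 0).2 ≤ t) (htK : t ≤ (p K).2) : ∃ k ≤ n, p k = ((p 0).1, t) := by
  obtain ⟨k, rfl⟩ := Nat.exists_eq_add_of_le h0t
  obtain ⟨hkK, hpk⟩ := h.eq_add_of_le hψ hω htK
  exact ⟨k, hkK.trans h.peak_le, hpk⟩

lemma IsTaut.first_column_or_peak (hψ : 1 < ψ) (hω : 0 < ω) (h : IsTaut Y ψ ω p n K) {k : ℕ}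
    (hk : k ≤ K) : ((p k).1 = (p 0).1 ∧ (p 0).2 ≤ (p k).2) ∨ (p k).2 = (p K).2 := by
  rcases le_total ((p 0).2 + k) (p K).2 with hle | hge
  · simp [(h.eq_add_of_le hψ hω hle).2]
  · exact .inr (h.depth_eq_of_le hψ hω hge hk)

lemma IsTaut.exists_eq_last (hψ : 1 < ψ) (hω : 0 < ω) (h : IsTaut Y ψ ω p n K) {t : ℕ}
    (hnt : (p n).2 ≤ t) (htK : t ≤ (p K).2) : ∃ k ≤ n, p k = ((p n).1, t) := by
  have hpeak : (p (n - (n - K))).2 = (p K).2 := by rw [Nat.sub_sub_self h.peak_le]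
  obtain ⟨k, -, hk⟩ := h.reverse.exists_eq_first hψ hω hnt (htK.trans_eq hpeak.symm)
  exact ⟨n - k, Nat.sub_le n k, hk⟩

lemma IsTaut.column_or_peak (hψ : 1 < ψ) (hω : 0 < ω) (h : IsTaut Y ψ ω p n K) {k : ℕ}
    (hk : k ≤ n) : ((p k).1 = (p 0).1 ∧ (p 0).2 ≤ (p k).2) ∨
      ((p k).1 = (p n).1 ∧ (p n).2 ≤ (p k).2) ∨ (p k).2 = (p K).2 := by
  rcases le_total k K with hkK | hKk
  · exact (h.first_column_or_peak hψ hω hkK).imp_right .inr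
  · have hrev := h.reverse.first_column_or_peak hψ hω (Nat.sub_le_sub_left hKk n)
    simp only [Nat.sub_zero, Nat.sub_sub_self hk, Nat.sub_sub_self h.peak_le] at hrev
    exact .inr hrev

end Detour

section Geodesic

variable {Y : Set H} {ψ ω : ℝ} {u v : H × ℕ} {p : ℕ → H × ℕ} {n m K : ℕ}

lemma IsGeodesicPath.pathLen_le_detourLen (hψ : 1 ≤ ψ) (hω : 0 ≤ ω)
    (h : IsGeodesicPath Y ψ ω p n) (hfirst : (p 0).2 ≤ m) (hlast : (p n).2 ≤ m) :
    pathLen ψ ω p n ≤ detourLen Y ψ ω (p 0) (p n) m := by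
  have hjoin := joinedWithin_detourLen (by positivity) ω (h.1.reachable n.zero_le le_rfl)
    hfirst hlast
  exact h.2.trans_le (hjoin.cuspDist_le hψ hω)

lemma IsGeodesicPath.exists_isTaut (hψ : 1 ≤ ψ) (hω : 0 ≤ ω) (h : IsGeodesicPath Y ψ ω p n) :
    ∃ K, IsTaut Y ψ ω p n K := by
  obtain ⟨K, hK, hmax⟩ := Finset.exists_max_image (Finset.range (n + 1)) (fun k ↦ (p k).2)
    Finset.nonempty_range_add_one
  have hdepth : ∀ k ≤ n, (p k).2 ≤ (p K).2 := fun k hk ↦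
    hmax k (Finset.mem_range_succ_iff.2 hk)
  exact ⟨K, h.1, Finset.mem_range_succ_iff.1 hK, hdepth,
    h.pathLen_le_detourLen hψ hω (hdepth 0 n.zero_le) (hdepth n le_rfl)⟩

lemma IsGeodesicPath.detourLen_peak_le (hψ : 1 ≤ ψ) (hω : 0 ≤ ω)
    (h : IsGeodesicPath Y ψ ω p n) (htaut : IsTaut Y ψ ω p n K)
    (hfirst : (p 0).2 ≤ m) (hlast : (p n).2 ≤ m) :
    detourLen Y ψ ω (p 0) (p n) (p K).2 ≤ detourLen Y ψ ω (p 0) (p n) m := by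
  have hlower :=
    h.1.detourLen_le_pathLen_sub hψ hω htaut.depth_le K.zero_le htaut.peak_le le_rfl
  rw [pathLen_zero, sub_zero] at hlower
  exact hlower.trans (h.pathLen_le_detourLen hψ hω hfirst hlast)

lemma IsGeodesicPath.dist_mul_le (hψ : 1 ≤ ψ) (hω : 0 ≤ ω)
    (h : IsGeodesicPath Y ψ ω p n) (htaut : IsTaut Y ψ ω p n K) :
    (mulCayley Y).dist (p 0).1 (p n).1 * (ψ - 1) ≤ 2 * (ω * Real.log ψ) * ψ ^ ((p K).2 + 1) := by
  have hfirst := htaut.depth_le 0 n.zero_le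
  have hlast := htaut.depth_le n le_rfl
  have hdeeper := h.detourLen_peak_le hψ hω htaut (m := (p K).2 + 1) (by omega) (by omega)
  rw [detourLen_succ Y (by positivity), le_add_iff_nonneg_right, sub_nonneg] at hdeeper
  exact (div_le_iff₀ (by positivity)).1 hdeeper

lemma IsGeodesicPath.le_dist_mul (hψ : 1 ≤ ψ) (hω : 0 ≤ ω)
    (h : IsGeodesicPath Y ψ ω p n) (htaut : IsTaut Y ψ ω p n K)
    (hfirst : (p 0).2 < (p K).2) (hlast : (p n).2 < (p K).2) :
    2 * (ω * Real.log ψ) * ψ ^ (p K).2 ≤ (mulCayley Y).dist (p 0).1 (p n).1 * (ψ - 1) := by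
  obtain ⟨m, hm⟩ := Nat.exists_eq_add_one_of_ne_zero (Nat.ne_zero_of_lt hfirst)
  have hshallower := h.detourLen_peak_le hψ hω htaut (m := m) (by omega) (by omega)
  rw [hm, detourLen_succ Y (by positivity), add_le_iff_nonpos_right, sub_nonpos] at hshallower
  rw [hm]
  exact (le_div_iff₀ (by positivity)).1 hshallower

lemma joinedWithin_horizontal_of_dist_mul_le (hψ : 1 < ψ) (hω : 0 ≤ ω) {g h : H}
    (hgh : (mulCayley Y).Reachable g h)
    (hdist : (mulCayley Y).dist g h * (ψ - 1) ≤ 2 * (ω * Real.log ψ) * ψ ^ (m + 1))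
    {t : ℕ} (hmt : m ≤ t) : JoinedWithin Y ψ ω (g, t) (h, t) (2 * ω * ψ) := by
  refine (joinedWithin_horizontal (by positivity) ω hgh t).mono ?_
  rw [← div_eq_mul_inv, div_le_iff₀ (by positivity)]
  refine le_of_mul_le_mul_right ?_ (sub_pos.2 hψ)
  calc (mulCayley Y).dist g h * (ψ - 1)
    _ ≤ 2 * (ω * Real.log ψ) * ψ ^ (m + 1) := hdist
    _ ≤ 2 * (ω * (ψ - 1)) * ψ ^ (t + 1) := by
        gcongr
        · exact Real.log_le_sub_one_of_pos (by positivity)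
        · exact hψ.le
    _ = 2 * ω * ψ * ψ ^ t * (ψ - 1) := by ring

/-- The shape of a geodesic from `u` to `v`: it runs down the column over `u` to its maximal depth
`m`, across at depth `m`, and up the column over `v`; moreover `ψ ^ m` is comparable to the word
distance of the endpoints. Unlike the path, this description is symmetric in `u` and `v`. -/
structure HasDetourShape (Y : Set H) (ψ ω : ℝ) (p : ℕ → H × ℕ) (n : ℕ) (u v : H × ℕ) (m : ℕ) :
    Prop where
  left_le : u.2 ≤ m
  right_le : v.2 ≤ m
  depth_le : ∀ k ≤ n, (p k).2 ≤ m
  reachable : (mulCayley Y).Reachable u.1 v.1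
  dist_mul_le : (mulCayley Y).dist u.1 v.1 * (ψ - 1) ≤ 2 * (ω * Real.log ψ) * ψ ^ (m + 1)
  le_dist_mul : u.2 < m → v.2 < m →
    2 * (ω * Real.log ψ) * ψ ^ m ≤ (mulCayley Y).dist u.1 v.1 * (ψ - 1)
  exists_eq_left : ∀ t, u.2 ≤ t → t ≤ m → ∃ k ≤ n, p k = (u.1, t)
  exists_eq_right : ∀ t, v.2 ≤ t → t ≤ m → ∃ k ≤ n, p k = (v.1, t)
  vertex_cases : ∀ k ≤ n, ((p k).1 = u.1 ∧ u.2 ≤ (p k).2) ∨ ((p k).1 = v.1 ∧ v.2 ≤ (p k).2) ∨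
    (JoinedWithin Y ψ ω (p k) (u.1, m) (2 * ω * ψ) ∧
      JoinedWithin Y ψ ω (p k) (v.1, m) (2 * ω * ψ))

lemma HasDetourShape.symm (h : HasDetourShape Y ψ ω p n u v m) :
    HasDetourShape Y ψ ω p n v u m where
  left_le := h.right_le
  right_le := h.left_le
  depth_le := h.depth_le
  reachable := h.reachable.symm
  dist_mul_le := by rw [SimpleGraph.dist_comm]; exact h.dist_mul_le
  le_dist_mul hv hu := by rw [SimpleGraph.dist_comm]; exact h.le_dist_mul hu hv
  exists_eq_left := h.exists_eq_right
  exists_eq_right := h.exists_eq_left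
  vertex_cases k hk := by
    rcases h.vertex_cases k hk with hleft | hright | ⟨hjoin_left, hjoin_right⟩
    exacts [.inr (.inl hleft), .inl hright, .inr (.inr ⟨hjoin_right, hjoin_left⟩)]

lemma IsGeodesicPath.joinedWithin_peak (hψ : 1 < ψ) (hω : 0 ≤ ω) (h : IsGeodesicPath Y ψ ω p n)
    (htaut : IsTaut Y ψ ω p n K) {k : ℕ} (hk : k ≤ n) (hpeak : (p k).2 = (p K).2) :
    JoinedWithin Y ψ ω (p k) ((p 0).1, (p K).2) (2 * ω * ψ) ∧
      JoinedWithin Y ψ ω (p k) ((p n).1, (p K).2) (2 * ω * ψ) := by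
  have hadd := htaut.dist_add_dist_le hψ.le hω hk
  have hjoin {x : H} (hreach : (mulCayley Y).Reachable (p k).1 x)
      (hle : (mulCayley Y).dist (p k).1 x ≤ (mulCayley Y).dist (p 0).1 (p n).1) :
      JoinedWithin Y ψ ω (p k) (x, (p K).2) (2 * ω * ψ) := by
    rw [← hpeak]
    refine joinedWithin_horizontal_of_dist_mul_le hψ hω hreach
      (le_trans ?_ (h.dist_mul_le hψ.le hω htaut)) hpeak.ge
    exact mul_le_mul_of_nonneg_right (mod_cast hle) (sub_nonneg.2 hψ.le)
  exact ⟨hjoin (h.1.reachable k.zero_le hk).symm (by rw [SimpleGraph.dist_comm]; omega),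
    hjoin (h.1.reachable hk le_rfl) (by omega)⟩

lemma IsGeodesicPath.exists_hasDetourShape (hψ : 1 < ψ) (hω : 0 < ω)
    (h : IsGeodesicPath Y ψ ω p n) : ∃ m, HasDetourShape Y ψ ω p n (p 0) (p n) m := by
  obtain ⟨K, htaut⟩ := h.exists_isTaut hψ.le hω.le
  exact ⟨(p K).2,
    { left_le := htaut.depth_le 0 n.zero_le
      right_le := htaut.depth_le n le_rfl
      depth_le := htaut.depth_le
      reachable := h.1.reachable n.zero_le le_rfl
      dist_mul_le := h.dist_mul_le hψ.le hω.le htaut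
      le_dist_mul := h.le_dist_mul hψ.le hω.le htaut
      exists_eq_left := fun _ ↦ htaut.exists_eq_first hψ hω
      exists_eq_right := fun _ ↦ htaut.exists_eq_last hψ hω
      vertex_cases := fun _ hk ↦ (htaut.column_or_peak hψ hω hk).imp_right
        (Or.imp_right (h.joinedWithin_peak hψ hω.le htaut hk)) }⟩

end Geodesic

section Triangle

variable {Y : Set H} {ψ ω δ : ℝ} {a b c : H × ℕ} {p q r : ℕ → H × ℕ} {n l s mab mbc mac : ℕ}

lemma le_add_of_pow_le_two_mul_pow {ψ : ℝ} (hψ : 1 < ψ) {i j : ℕ}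
    (h : ψ ^ i ≤ 2 * ψ ^ (j + 1)) : (i : ℝ) ≤ j + (Real.log 2 / Real.log ψ + 1) := by
  have hlog := Real.log_pos hψ
  have hle := Real.log_le_log (by positivity) h
  rw [Real.log_mul (by positivity) (by positivity), Real.log_pow, Real.log_pow] at hle
  push_cast at hle
  refine le_of_mul_le_mul_right ?_ hlog
  field_simp
  linarith

lemma HasDetourShape.depth_le_add (hψ : 1 < ψ) (hω : 0 < ω)
    (hab : HasDetourShape Y ψ ω p n a b mab) (hbc : HasDetourShape Y ψ ω q l b c mbc)
    (hac : HasDetourShape Y ψ ω r s a c mac) (hle : mbc ≤ mac) :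
    (mab : ℝ) ≤ mac + (Real.log 2 / Real.log ψ + 1) := by
  have hlog := Real.log_pos hψ
  rcases le_or_gt mab mac with hshallow | hdeep
  · have hcast : (mab : ℝ) ≤ mac := mod_cast hshallow
    exact le_add_of_le_of_nonneg hcast (by positivity)
  have hlower := hab.le_dist_mul (hac.left_le.trans_lt hdeep)
    ((hbc.left_le.trans hle).trans_lt hdeep)
  have hdist : ((mulCayley Y).dist a.1 b.1 : ℝ)
      ≤ (mulCayley Y).dist a.1 c.1 + (mulCayley Y).dist b.1 c.1 := by
    rw [SimpleGraph.dist_comm (u := b.1)]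
    exact_mod_cast hac.reachable.dist_triangle_left b.1
  have hpow : ψ ^ (mbc + 1) ≤ ψ ^ (mac + 1) := by gcongr; exact hψ.le
  refine le_add_of_pow_le_two_mul_pow hψ
    (le_of_mul_le_mul_left (a := 2 * (ω * Real.log ψ)) ?_ (by positivity))
  calc 2 * (ω * Real.log ψ) * ψ ^ mab
    _ ≤ (mulCayley Y).dist a.1 b.1 * (ψ - 1) := hlower
    _ ≤ ((mulCayley Y).dist a.1 c.1 + (mulCayley Y).dist b.1 c.1) * (ψ - 1) :=
        mul_le_mul_of_nonneg_right hdist (sub_nonneg.2 hψ.le)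
    _ = (mulCayley Y).dist a.1 c.1 * (ψ - 1) + (mulCayley Y).dist b.1 c.1 * (ψ - 1) := add_mul ..
    _ ≤ 2 * (ω * Real.log ψ) * ψ ^ (mac + 1) + 2 * (ω * Real.log ψ) * ψ ^ (mac + 1) :=
        add_le_add hac.dist_mul_le (hbc.dist_mul_le.trans (by gcongr))
    _ = 2 * (ω * Real.log ψ) * (2 * ψ ^ (mac + 1)) := by ring

lemma HasDetourShape.joinedWithin_min_depth (hψ : 1 < ψ) (hω : 0 < ω)
    (hab : HasDetourShape Y ψ ω p n a b mab) (hbc : HasDetourShape Y ψ ω q l b c mbc)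
    (hac : HasDetourShape Y ψ ω r s a c mac) (hle : mbc ≤ mac) (h : H) {t : ℕ} (ht : t ≤ mab) :
    JoinedWithin Y ψ ω (h, t) (h, min t mac)
      ((Real.log 2 / Real.log ψ + 1) * (ω * Real.log ψ)) := by
  have hlog := Real.log_pos hψ
  have hgap : (t : ℝ) ≤ mac + (Real.log 2 / Real.log ψ + 1) :=
    le_trans (mod_cast ht) (hab.depth_le_add hψ hω hbc hac hle)
  have hnonneg : 0 ≤ Real.log 2 / Real.log ψ + 1 := by positivity
  refine (joinedWithin_vertical Y ψ ω h (min_le_left t mac)).symm.mono ?_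
  gcongr
  rw [Nat.cast_min]
  rcases min_choice (t : ℝ) mac with hmin | hmin <;> rw [hmin] <;> linarith

lemma HasDetourShape.exists_joinedWithin_left (hψ : 1 < ψ) (hω : 0 < ω)
    (hab : HasDetourShape Y ψ ω p n a b mab) (hbc : HasDetourShape Y ψ ω q l b c mbc)
    (hac : HasDetourShape Y ψ ω r s a c mac) (hle : mbc ≤ mac) {t : ℕ} (hat : a.2 ≤ t)
    (ht : t ≤ mab) :
    ∃ j ≤ s, JoinedWithin Y ψ ω (a.1, t) (r j)
      ((Real.log 2 / Real.log ψ + 1) * (ω * Real.log ψ)) := by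
  obtain ⟨j, hj, hrj⟩ :=
    hac.exists_eq_left (min t mac) (le_min hat hac.left_le) (min_le_right _ _)
  exact ⟨j, hj, hrj ▸ hab.joinedWithin_min_depth hψ hω hbc hac hle a.1 ht⟩

lemma HasDetourShape.exists_joinedWithin_right (hψ : 1 < ψ) (hω : 0 < ω)
    (hab : HasDetourShape Y ψ ω p n a b mab) (hbc : HasDetourShape Y ψ ω q l b c mbc)
    (hac : HasDetourShape Y ψ ω r s a c mac) (hle : mbc ≤ mac) {t : ℕ} (hbt : b.2 ≤ t)
    (ht : t ≤ mab) :
    (∃ j ≤ l, JoinedWithin Y ψ ω (b.1, t) (q j)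
      (2 * ω * ψ + (Real.log 2 / Real.log ψ + 1) * (ω * Real.log ψ))) ∨
    ∃ j ≤ s, JoinedWithin Y ψ ω (b.1, t) (r j)
      (2 * ω * ψ + (Real.log 2 / Real.log ψ + 1) * (ω * Real.log ψ)) := by
  have hrise := hab.joinedWithin_min_depth hψ hω hbc hac hle b.1 ht
  rcases le_or_gt (min t mac) mbc with hshallow | hdeep
  · obtain ⟨j, hj, hqj⟩ :=
      hbc.exists_eq_left (min t mac) (le_min hbt (hbc.left_le.trans hle)) hshallow
    exact .inl ⟨j, hj, hqj ▸ hrise.mono (le_add_of_nonneg_left (by positivity))⟩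
  · obtain ⟨j, hj, hrj⟩ :=
      hac.exists_eq_right (min t mac) (hbc.right_le.trans hdeep.le) (min_le_right _ _)
    have hacross := joinedWithin_horizontal_of_dist_mul_le hψ hω.le hbc.reachable
      hbc.dist_mul_le hdeep.le
    exact .inr ⟨j, hj, hrj ▸ (hrise.trans hacross).mono (add_comm _ _).le⟩

lemma HasDetourShape.exists_joinedWithin_of_le (hψ : 1 < ψ) (hω : 0 < ω)
    (hab : HasDetourShape Y ψ ω p n a b mab) (hbc : HasDetourShape Y ψ ω q l b c mbc)
    (hac : HasDetourShape Y ψ ω r s a c mac) (hle : mbc ≤ mac) {k : ℕ} (hk : k ≤ n) :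
    (∃ j ≤ l, JoinedWithin Y ψ ω (p k) (q j)
      (2 * ω * ψ + (Real.log 2 / Real.log ψ + 1) * (ω * Real.log ψ))) ∨
    ∃ j ≤ s, JoinedWithin Y ψ ω (p k) (r j)
      (2 * ω * ψ + (Real.log 2 / Real.log ψ + 1) * (ω * Real.log ψ)) := by
  have hdepth := hab.depth_le k hk
  rcases hab.vertex_cases k hk with ⟨hfst, hak⟩ | ⟨hfst, hbk⟩ | ⟨hacross, -⟩
  · obtain ⟨j, hj, hjoin⟩ := hab.exists_joinedWithin_left hψ hω hbc hac hle hak hdepth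
    rw [← hfst] at hjoin
    exact .inr ⟨j, hj, hjoin.mono (le_add_of_nonneg_left (by positivity))⟩
  · have hright := hab.exists_joinedWithin_right hψ hω hbc hac hle hbk hdepth
    rwa [← hfst] at hright
  · obtain ⟨j, hj, hjoin⟩ := hab.exists_joinedWithin_left hψ hω hbc hac hle hab.left_le le_rfl
    exact .inr ⟨j, hj, hacross.trans hjoin⟩

lemma HasDetourShape.sideThin (hψ : 1 < ψ) (hω : 0 < ω)
    (hab : HasDetourShape Y ψ ω p n a b mab) (hbc : HasDetourShape Y ψ ω q l b c mbc)
    (hac : HasDetourShape Y ψ ω r s a c mac) :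
    SideThin Y ψ ω (2 * ω * ψ + (Real.log 2 / Real.log ψ + 1) * (ω * Real.log ψ))
      p n q l r s := by
  intro k hk
  have hjoin := (le_total mbc mac).elim
    (fun hle ↦ hab.exists_joinedWithin_of_le hψ hω hbc hac hle hk)
    (fun hle ↦ (hab.symm.exists_joinedWithin_of_le hψ hω hac hbc hle hk).symm)
  rcases hjoin with ⟨j, hj, hjoin⟩ | ⟨j, hj, hjoin⟩
  · exact ⟨j, .inl ⟨hj, hjoin.cuspDist_le hψ.le hω.le⟩⟩
  · exact ⟨j, .inr ⟨hj, hjoin.cuspDist_le hψ.le hω.le⟩⟩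

lemma SideThin.mono {δ' : ℝ} (h : SideThin Y ψ ω δ p n q l r s) (hδ : δ ≤ δ') :
    SideThin Y ψ ω δ' p n q l r s := fun k hk ↦
  (h k hk).imp fun _ ↦ Or.imp (And.imp_right hδ.trans') (And.imp_right hδ.trans')

end Triangle

theorem cusp_complex_hyperbolic_general {Y : Set H} {ψ ω : ℝ} (hψ : 1 < ψ) (hω : 0 < ω)
    {a b c : H × ℕ} {pab pbc pac : ℕ → H × ℕ} {nab nbc nac : ℕ}
    (hab : IsGeodesicPath Y ψ ω pab nab) (hab0 : pab 0 = a) (hab1 : pab nab = b)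
    (hbc : IsGeodesicPath Y ψ ω pbc nbc) (hbc0 : pbc 0 = b) (hbc1 : pbc nbc = c)
    (hac : IsGeodesicPath Y ψ ω pac nac) (hac0 : pac 0 = a) (hac1 : pac nac = c)
    {δ : ℝ} (hδ : 2 * ω * ψ + (Real.log 2 / Real.log ψ + 1) * (ω * Real.log ψ) ≤ δ) :
    SideThin Y ψ ω δ pab nab pbc nbc pac nac ∧ SideThin Y ψ ω δ pbc nbc pab nab pac nac ∧
      SideThin Y ψ ω δ pac nac pab nab pbc nbc := by
  obtain ⟨mab, sab⟩ := hab.exists_hasDetourShape hψ hω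
  obtain ⟨mbc, sbc⟩ := hbc.exists_hasDetourShape hψ hω
  obtain ⟨mac, sac⟩ := hac.exists_hasDetourShape hψ hω
  rw [hab0, hab1] at sab
  rw [hbc0, hbc1] at sbc
  rw [hac0, hac1] at sac
  exact ⟨(sab.sideThin hψ hω sbc sac).mono hδ, (sbc.symm.sideThin hψ hω sab.symm sac.symm).mono hδ,
    (sac.symm.sideThin hψ hω sab sbc.symm).mono hδ⟩

/-- The cusp complex of a finitely generated group is δ-hyperbolic:
every geodesic triangle is δ-thin, with
`δ = 4ωψ + (log_ψ 2 + 2) ω log ψ`. -/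
theorem cusp_complex_hyperbolic
    (Y : Set H) (hYfin : Y.Finite) (hYgen : Subgroup.closure Y = ⊤)
    (ψ ω : ℝ) (hψ : 1 < ψ) (hω : 0 < ω)
    (a b c : H × ℕ)
    (pab : ℕ → H × ℕ) (nab : ℕ) (hab : IsGeodesicPath Y ψ ω pab nab)
    (hab0 : pab 0 = a) (hab1 : pab nab = b)
    (pbc : ℕ → H × ℕ) (nbc : ℕ) (hbc : IsGeodesicPath Y ψ ω pbc nbc)
    (hbc0 : pbc 0 = b) (hbc1 : pbc nbc = c)
    (pac : ℕ → H × ℕ) (nac : ℕ) (hac : IsGeodesicPath Y ψ ω pac nac)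
    (hac0 : pac 0 = a) (hac1 : pac nac = c) :
    SideThin Y ψ ω (4 * ω * ψ + (Real.log 2 / Real.log ψ + 2) * (ω * Real.log ψ))
        pab nab pbc nbc pac nac ∧
    SideThin Y ψ ω (4 * ω * ψ + (Real.log 2 / Real.log ψ + 2) * (ω * Real.log ψ))
        pbc nbc pab nab pac nac ∧
    SideThin Y ψ ω (4 * ω * ψ + (Real.log 2 / Real.log ψ + 2) * (ω * Real.log ψ))
        pac nac pab nab pbc nbc := by
  have hlog := Real.log_pos hψ
  exact cusp_complex_hyperbolic_general hψ hω hab hab0 hab1 hbc hbc0 hbc1 hac hac0 hac1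
    (by gcongr <;> norm_num)
end

section
/- For every C ∈ ℝ there exists L = L(C) ∈ ℝ (one may take L = 2C + log 16) with the following property: let T ⊂ ℍⁿ be a geodesic triangle with exactly one ideal vertex, with ordinary vertices x and y joined by a geodesic arc α of length ℓ > L, and let β and γ be the geodesic rays of T issuing from x and y respectively (both asymptotic to the ideal vertex); suppose b_β(y) = 0. Then the midpoint z of α satisfies b_β(z) ≤ −C. -/
/-!
STATEMENT 16: For every `C ∈ ℝ` there exists `L = L(C) ∈ ℝ` such that: whenever
`T ⊂ ℍⁿ` is a geodesic triangle with one ideal vertex, ordinary vertices `x, y` joined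
by a geodesic arc `α` of length `ℓ > L`, and geodesic rays `β` (from `x`) and `γ`
(from `y`) asymptotic to each other, normalized so that `b_β(y) = 0`, the midpoint
`z = α(ℓ/2)` of `α` satisfies `b_β(z) ≤ -C`.

Real hyperbolic `n`-space is realized by the upper half-space model, with the explicit
distance function `d(p,q) = arcosh (1 + (|p₁-q₁|² + (p₂-q₂)²) / (2 p₂ q₂))`.
-/

open Set

/-- Upper half-space model of `ℍⁿ` (the last coordinate is the height). -/
def UHS (n : ℕ) : Type := {p : EuclideanSpace ℝ (Fin n) × ℝ // 0 < p.2}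

/-- Inverse hyperbolic cosine. -/
noncomputable def arcosh (x : ℝ) : ℝ := Real.log (x + Real.sqrt (x ^ 2 - 1))

/-- The hyperbolic distance on the upper half-space model. -/
noncomputable def uhsDist {n : ℕ} (p q : UHS n) : ℝ :=
  arcosh (1 + (dist p.1.1 q.1.1 ^ 2 + (p.1.2 - q.1.2) ^ 2) / (2 * p.1.2 * q.1.2))

/-- `f` restricted to `s` is a unit-speed geodesic for the hyperbolic distance. -/
def UIsGeodesicOn {n : ℕ} (f : ℝ → UHS n) (s : Set ℝ) : Prop :=
  ∀ a ∈ s, ∀ b ∈ s, uhsDist (f a) (f b) = |a - b|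

/-- A geodesic ray in `ℍⁿ`. -/
def UIsRay {n : ℕ} (r : ℝ → UHS n) : Prop := UIsGeodesicOn r (Ici 0)

/-- Two rays are asymptotic if they stay at bounded distance. -/
def UAsymptotic {n : ℕ} (r r' : ℝ → UHS n) : Prop :=
  ∃ K : ℝ, ∀ t ≥ (0:ℝ), uhsDist (r t) (r' t) ≤ K

/-- The Buseman function of the ray `r` takes the value `L` at `x`. -/
def UBusemannTendsto {n : ℕ} (r : ℝ → UHS n) (x : UHS n) (L : ℝ) : Prop :=
  Filter.Tendsto (fun t => uhsDist x (r t) - t) Filter.atTop (nhds L)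

open Filter Real Topology

/-!
In the hyperboloid model the midpoint `z` of `x` and `y` is proportional to `x + y`, so pairing with
a fourth point `w` gives `cosh d(x, w) + cosh d(y, w) = 2 cosh (d(x, y) / 2) cosh d(z, w)`. Let `w`
run to infinity along a ray and multiply by `2 e⁻ᵗ`: as `2 cosh s ~ eˢ`, the identity passes to
Busemann functions as `e ^ b(x) + e ^ b(y) = 2 cosh (d(x, y) / 2) e ^ b(z)`. When `b(x) = b(y) = 0`
this says `b(z) = -log cosh (ℓ / 2) ≤ log 2 - ℓ / 2`.
-/

theorem tendsto_sub_iff_tendsto_cosh_mul_exp_neg {ι : Type*} {l : Filter ι} {f g : ι → ℝ} {a : ℝ}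
    (hf : ∀ i, 0 ≤ f i) (hg : Tendsto g l atTop) :
    Tendsto (fun i => f i - g i) l (𝓝 a) ↔
      Tendsto (fun i => cosh (f i) * exp (-g i)) l (𝓝 (exp a / 2)) := by
  have exp_neg_g : Tendsto (fun i => exp (-g i)) l (𝓝 0) :=
    tendsto_exp_neg_atTop_nhds_zero.comp hg
  have error_tendsto : Tendsto (fun i => exp (-f i) * exp (-g i)) l (𝓝 0) :=
    squeeze_zero (fun i => by positivity)
      (fun i => mul_le_of_le_one_left (exp_pos _).le (exp_le_one_iff.2 (neg_nonpos.2 (hf i))))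
      exp_neg_g
  have exp_sub_add_error (i : ι) :
      exp (f i - g i) + exp (-f i) * exp (-g i) = 2 * (cosh (f i) * exp (-g i)) := by
    rw [cosh_eq, sub_eq_add_neg, exp_add]
    ring
  rw [isOpenEmbedding_exp.tendsto_nhds_iff]
  constructor
  · intro h
    have limit := (h.add error_tendsto).div_const 2
    rw [add_zero] at limit
    exact limit.congr fun i => by
      rw [Function.comp_apply, exp_sub_add_error, mul_div_cancel_left₀ _ two_ne_zero]
  · intro h
    have limit := (h.const_mul 2).sub error_tendsto
    rw [mul_div_cancel₀ _ two_ne_zero, sub_zero] at limit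
    exact limit.congr fun i => by
      rw [Function.comp_apply, ← exp_sub_add_error, add_sub_cancel_right]

theorem log_exp_add_exp_div_two_mul_cosh_le (a b h : ℝ) :
    log ((exp a + exp b) / (2 * cosh h)) ≤ max a b + log 2 - h := by
  have numerator : exp a + exp b ≤ exp (max a b) * 2 := by
    linarith [exp_le_exp.2 (le_max_left a b), exp_le_exp.2 (le_max_right a b)]
  have denominator : exp h ≤ 2 * cosh h := by
    linarith [cosh_eq h, exp_pos (-h)]
  rw [log_le_iff_le_exp (by positivity), exp_sub, exp_add, exp_log two_pos]
  gcongr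

variable {n : ℕ}

theorem one_le_uhsDist_arcosh_arg (p q : UHS n) :
    1 ≤ 1 + (dist p.1.1 q.1.1 ^ 2 + (p.1.2 - q.1.2) ^ 2) / (2 * p.1.2 * q.1.2) := by
  have hp := p.2
  have hq := q.2
  exact le_add_of_nonneg_right (by positivity)

-- The root-level `arcosh` is definitionally equal to `Real.arcosh`.
theorem uhsDist_nonneg (p q : UHS n) : 0 ≤ uhsDist p q :=
  arcosh_nonneg (one_le_uhsDist_arcosh_arg p q)

theorem two_mul_height_mul_height_mul_cosh_uhsDist (p q : UHS n) :
    2 * p.1.2 * q.1.2 * cosh (uhsDist p q) =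
      ‖p.1.1 - q.1.1‖ ^ 2 + p.1.2 ^ 2 + q.1.2 ^ 2 := by
  have cosh_uhsDist : cosh (uhsDist p q) = _ := cosh_arcosh (one_le_uhsDist_arcosh_arg p q)
  have hp := p.2.ne'
  have hq := q.2.ne'
  rw [cosh_uhsDist, dist_eq_norm]
  field_simp
  ring

/-- `z` is a midpoint of `x` and `y` in `ℍⁿ`, expressed by distances so that no geodesic from `x`
to `y` has to be chosen. -/
def UIsMidpoint (z x y : UHS n) : Prop :=
  uhsDist x z = uhsDist x y / 2 ∧ uhsDist y z = uhsDist x y / 2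

namespace UIsMidpoint

variable {x y z : UHS n}

-- Up to a positive factor, this is the Lorentzian square of `x + y - 2 cosh (d(x, y) / 2) z`.
theorem norm_sq_add_sq_eq_zero (hz : UIsMidpoint z x y) :
    ‖y.1.2 • (x.1.1 - z.1.1) + x.1.2 • (y.1.1 - z.1.1)‖ ^ 2 +
      (z.1.2 * (x.1.2 + y.1.2) - 2 * cosh (uhsDist x y / 2) * x.1.2 * y.1.2) ^ 2 = 0 := by
  have cosh_xz := two_mul_height_mul_height_mul_cosh_uhsDist x z
  have cosh_yz := two_mul_height_mul_height_mul_cosh_uhsDist y z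
  have cosh_xy := two_mul_height_mul_height_mul_cosh_uhsDist x y
  have cosh_double : cosh (uhsDist x y) = 2 * cosh (uhsDist x y / 2) ^ 2 - 1 := by
    linarith [cosh_two_mul (uhsDist x y / 2), sinh_sq (uhsDist x y / 2),
      congrArg cosh (mul_div_cancel₀ (uhsDist x y) (two_ne_zero' ℝ))]
  rw [hz.1] at cosh_xz
  rw [hz.2] at cosh_yz
  rw [cosh_double, ← sub_sub_sub_cancel_right x.1.1 y.1.1 z.1.1, norm_sub_sq_real] at cosh_xy
  rw [norm_add_sq_real, norm_smul, norm_smul, real_inner_smul_left, real_inner_smul_right,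
    mul_pow, mul_pow, norm_eq_abs, norm_eq_abs, sq_abs, sq_abs]
  linear_combination x.1.2 * y.1.2 * cosh_xy - (y.1.2 ^ 2 + x.1.2 * y.1.2) * cosh_xz -
    (x.1.2 ^ 2 + x.1.2 * y.1.2) * cosh_yz

theorem height_smul_sub_add_height_smul_sub (hz : UIsMidpoint z x y) :
    y.1.2 • (x.1.1 - z.1.1) + x.1.2 • (y.1.1 - z.1.1) = 0 := by
  have := (add_eq_zero_iff_of_nonneg (sq_nonneg _) (sq_nonneg _)).1 hz.norm_sq_add_sq_eq_zero
  exact norm_eq_zero.1 (sq_eq_zero_iff.1 this.1)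

theorem height_mul_height_add_height (hz : UIsMidpoint z x y) :
    z.1.2 * (x.1.2 + y.1.2) = 2 * cosh (uhsDist x y / 2) * x.1.2 * y.1.2 := by
  have := (add_eq_zero_iff_of_nonneg (sq_nonneg _) (sq_nonneg _)).1 hz.norm_sq_add_sq_eq_zero
  exact sub_eq_zero.1 (sq_eq_zero_iff.1 this.2)

theorem cosh_uhsDist_add_cosh_uhsDist (hz : UIsMidpoint z x y) (w : UHS n) :
    cosh (uhsDist x w) + cosh (uhsDist y w) =
      2 * cosh (uhsDist x y / 2) * cosh (uhsDist z w) := by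
  have cosh_xz := two_mul_height_mul_height_mul_cosh_uhsDist x z
  have cosh_yz := two_mul_height_mul_height_mul_cosh_uhsDist y z
  have cosh_xw := two_mul_height_mul_height_mul_cosh_uhsDist x w
  have cosh_yw := two_mul_height_mul_height_mul_cosh_uhsDist y w
  have cosh_zw := two_mul_height_mul_height_mul_cosh_uhsDist z w
  rw [hz.1] at cosh_xz
  rw [hz.2] at cosh_yz
  rw [← sub_sub_sub_cancel_right x.1.1 w.1.1 z.1.1, norm_sub_sq_real] at cosh_xw
  rw [← sub_sub_sub_cancel_right y.1.1 w.1.1 z.1.1, norm_sub_sq_real] at cosh_yw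
  rw [norm_sub_rev] at cosh_zw
  have inner_eq_zero : y.1.2 * inner ℝ (x.1.1 - z.1.1) (w.1.1 - z.1.1) +
      x.1.2 * inner ℝ (y.1.1 - z.1.1) (w.1.1 - z.1.1) = 0 := by
    rw [← real_inner_smul_left, ← real_inner_smul_left, ← inner_add_left,
      hz.height_smul_sub_add_height_smul_sub, inner_zero_left]
  have heights_pos : 0 < 2 * x.1.2 * y.1.2 * z.1.2 * w.1.2 := by
    have := x.2; have := y.2; have := z.2; have := w.2
    positivity
  apply mul_left_cancel₀ heights_pos.ne'
  linear_combination z.1.2 * y.1.2 * cosh_xw + z.1.2 * x.1.2 * cosh_yw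
    - 2 * cosh (uhsDist x y / 2) * x.1.2 * y.1.2 * cosh_zw
    - z.1.2 * y.1.2 * cosh_xz - z.1.2 * x.1.2 * cosh_yz - 2 * z.1.2 * inner_eq_zero
    + (‖w.1.1 - z.1.1‖ ^ 2 + w.1.2 ^ 2 - z.1.2 ^ 2) * hz.height_mul_height_add_height

end UIsMidpoint

theorem uBusemannTendsto_iff_tendsto_cosh_mul_exp_neg {r : ℝ → UHS n} {x : UHS n} {b : ℝ} :
    UBusemannTendsto r x b ↔
      Tendsto (fun t => cosh (uhsDist x (r t)) * exp (-t)) atTop (𝓝 (exp b / 2)) :=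
  tendsto_sub_iff_tendsto_cosh_mul_exp_neg (fun _ => uhsDist_nonneg _ _) tendsto_id

theorem UIsMidpoint.uBusemannTendsto {r : ℝ → UHS n} {x y z : UHS n} {a b : ℝ}
    (hz : UIsMidpoint z x y) (hx : UBusemannTendsto r x a) (hy : UBusemannTendsto r y b) :
    UBusemannTendsto r z (log ((exp a + exp b) / (2 * cosh (uhsDist x y / 2)))) := by
  rw [uBusemannTendsto_iff_tendsto_cosh_mul_exp_neg] at hx hy ⊢
  have limit := (hx.add hy).div_const (2 * cosh (uhsDist x y / 2))
  rw [← add_div, div_right_comm] at limit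
  rw [exp_log (by positivity)]
  refine limit.congr fun t => ?_
  rw [← add_mul, hz.cosh_uhsDist_add_cosh_uhsDist, mul_assoc,
    mul_div_cancel_left₀ _ (by positivity)]

theorem UIsRay.uBusemannTendsto_apply_zero {r : ℝ → UHS n} (hr : UIsRay r) :
    UBusemannTendsto r (r 0) 0 := by
  refine tendsto_const_nhds.congr' ?_
  filter_upwards [eventually_ge_atTop 0] with t ht
  rw [hr 0 self_mem_Ici t ht, zero_sub, abs_neg, abs_of_nonneg ht, sub_self]

namespace UIsGeodesicOn

variable {α : ℝ → UHS n} {ℓ : ℝ}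

theorem uhsDist_endpoints (hα : UIsGeodesicOn α (Icc 0 ℓ)) (hℓ : 0 ≤ ℓ) :
    uhsDist (α 0) (α ℓ) = ℓ := by
  rw [hα _ (left_mem_Icc.2 hℓ) _ (right_mem_Icc.2 hℓ), zero_sub, abs_neg, abs_of_nonneg hℓ]

theorem uIsMidpoint (hα : UIsGeodesicOn α (Icc 0 ℓ)) (hℓ : 0 ≤ ℓ) :
    UIsMidpoint (α (ℓ / 2)) (α 0) (α ℓ) := by
  have half_mem : ℓ / 2 ∈ Icc 0 ℓ := ⟨by positivity, half_le_self hℓ⟩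
  rw [UIsMidpoint, hα.uhsDist_endpoints hℓ, hα _ (left_mem_Icc.2 hℓ) _ half_mem,
    hα _ (right_mem_Icc.2 hℓ) _ half_mem, zero_sub, abs_neg, sub_half,
    abs_of_nonneg half_mem.1]
  exact ⟨rfl, rfl⟩

end UIsGeodesicOn

theorem ideal_triangle_midpoint_depth_general {α β : ℝ → UHS n} {C ℓ b : ℝ} (hℓ : 0 ≤ ℓ)
    (hC : 2 * C + 2 * log 2 ≤ ℓ) (hα : UIsGeodesicOn α (Icc 0 ℓ)) (hβ : UIsRay β)
    (hβα : β 0 = α 0) (hb : UBusemannTendsto β (α ℓ) b) :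
    ∃ Lz ≤ max 0 b - C, UBusemannTendsto β (α (ℓ / 2)) Lz := by
  have busemann_start : UBusemannTendsto β (α 0) 0 := hβα ▸ hβ.uBusemannTendsto_apply_zero
  refine ⟨_, ?_, (hα.uIsMidpoint hℓ).uBusemannTendsto busemann_start hb⟩
  rw [hα.uhsDist_endpoints hℓ]
  linarith [log_exp_add_exp_div_two_mul_cosh_le 0 b (ℓ / 2)]

/-- Depth of the midpoint of the finite side of an ideal "isosceles" triangle in `ℍⁿ`. -/
theorem ideal_triangle_midpoint_depth (C : ℝ) :
    ∃ L : ℝ, ∀ (n : ℕ) (x y : UHS n) (ℓ : ℝ), ℓ > L →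
      ∀ α : ℝ → UHS n, UIsGeodesicOn α (Icc 0 ℓ) → α 0 = x → α ℓ = y →
      ∀ β γ : ℝ → UHS n, UIsRay β → UIsRay γ → β 0 = x → γ 0 = y → UAsymptotic β γ →
      UBusemannTendsto β y 0 →
      ∃ Lz ≤ -C, UBusemannTendsto β (α (ℓ / 2)) Lz := by
  refine ⟨max 0 (2 * C + 2 * log 2), ?_⟩
  rintro n _ _ ℓ hℓ α hα rfl rfl β γ hβ - hβα - - hb
  simpa only [max_self, zero_sub] using
    ideal_triangle_midpoint_depth_general (max_lt_iff.1 hℓ).1.le (max_lt_iff.1 hℓ).2.le hα hβ hβα hb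
end
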